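/- Let θ_t, m_t, g_t, s_t be the AdaBelief sequences with projected updates. Assume α_t = α/√t with α > 0, β_{1,1} = β_1, 0 ≤ β_{1,t} ≤ β_1 < 1 for all t, s_{t,i} ≤ s_{t+1,i} and s_{t,i} ≥ c > 0 for all t ∈ [T] and coordinates i, each f_t is convex and differentiable with g_t = ∇f_t(θ_t) and ‖g_t‖_∞ ≤ G_∞/2, and F has ℓ∞-diameter at most D_∞. Then for every θ* ∈ F: Σ_{t=1}^T [f_t(θ_t) − f_t(θ*)] ≤ (D_∞² √T)/(2α(1−β_1)) Σ_{i=1}^d s_{T,i}^{1/2} + ((1+β_1) α √(1+log T))/(2√c (1−β_1)³) Σ_{i=1}^d sqrt(Σ_{t=1}^T g_{t,i}⁴) + (D_∞²)/(2(1−β_1)) Σ_{t=1}^T Σ_{i=1}^d β_{1,t} s_{t,i}^{1/2}/α_t. -/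

import Mathlib

/-!
Convexity bounds each round's regret by `⟪g_t, θ_t - θ*⟫`, which is estimated coordinatewise. The
weighted projection does not increase the weighted distance to `θ*`, so the part of the gradient
seen through `m_t` costs a difference of consecutive potentials `w_t (θ_t - θ*)² / (2 α_t)` plus
`α_t m_t² / (2 w_t)`, where `w_t = √s_t`. The remaining part `β_{1,t} (g_t - m_{t-1}) (θ_t - θ*)` is
split by Young's inequality with weights chosen so that its quadratic term in `g_t - m_{t-1}` is
exactly the gap in the convexity bound `m_t² ≤ β_{1,t} m_{t-1}² + (1 - β_{1,t}) g_t²`. Summing over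
`t`, the potentials telescope, the momentum energy is absorbed at the price of one factor
`(1 - β₁)⁻¹`, and Cauchy–Schwarz against the harmonic sum produces the logarithm.
-/

open Finset Real
open scoped InnerProductSpace

theorem sub_le_of_convexOn_of_hasFDerivWithinAt {E : Type*} [NormedAddCommGroup E]
    [NormedSpace ℝ E] {S : Set E} {f : E → ℝ} {f' : E →L[ℝ] ℝ} {x z : E}
    (hf : ConvexOn ℝ S f) (hx : x ∈ S) (hz : z ∈ S) (hf' : HasFDerivWithinAt f f' S x) :
    f x - f z ≤ f' (x - z) := by
  let line : ℝ →ᵃ[ℝ] E := AffineMap.lineMap x z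
  have hline : Set.MapsTo line (Set.Icc 0 1) S := fun l hl => hf.1.lineMap_mem hx hz hl
  have hconv : ConvexOn ℝ (Set.Icc 0 1) (f ∘ line) :=
    (hf.comp_affineMap line).subset hline (convex_Icc 0 1)
  have hderiv : HasDerivWithinAt (f ∘ line) (f' (z - x)) (Set.Icc 0 1) 0 := by
    refine HasFDerivWithinAt.comp_hasDerivWithinAt (t := S) 0 ?_
      AffineMap.hasDerivAt_lineMap.hasDerivWithinAt hline
    simpa [line] using hf'
  have hslope : f' (z - x) ≤ f z - f x := by
    simpa [line, slope_def_field] using hconv.le_slope_of_hasDerivWithinAt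
      (Set.left_mem_Icc.2 zero_le_one) (Set.right_mem_Icc.2 zero_le_one) one_pos hderiv
  rw [← neg_sub z x, map_neg]
  linarith

theorem norm_sub_le_of_isMinOn_norm_sub {E : Type*} [NormedAddCommGroup E]
    [InnerProductSpace ℝ E] {K : Set E} (hK : Convex ℝ K) {y p z : E} (hp : p ∈ K) (hz : z ∈ K)
    (hmin : IsMinOn (fun x => ‖y - x‖) K p) : ‖p - z‖ ≤ ‖y - z‖ := by
  have hobtuse : ⟪y - p, z - p⟫_ℝ ≤ 0 :=
    (norm_eq_iInf_iff_real_inner_le_zero hK hp).1 (hmin.iInf_eq hp).symm z hz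
  have hexpand : ‖y - z‖ ^ 2 = ‖y - p‖ ^ 2 - 2 * ⟪y - p, z - p⟫_ℝ + ‖p - z‖ ^ 2 := by
    rw [norm_sub_rev p z, ← norm_sub_sq_real, sub_sub_sub_cancel_right]
  refine le_of_sq_le_sq ?_ (norm_nonneg _)
  linarith [sq_nonneg ‖y - p‖]

theorem sum_mul_sq_sub_le_of_isMinOn {ι : Type*} [Fintype ι] {K : Set (EuclideanSpace ℝ ι)}
    (hK : Convex ℝ K) {w y : ι → ℝ} (hw : ∀ i, 0 ≤ w i) {p z : EuclideanSpace ℝ ι} (hp : p ∈ K)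
    (hz : z ∈ K) (hmin : IsMinOn (fun x => ∑ i, w i * (x i - y i) ^ 2) K p) :
    ∑ i, w i * (p i - z i) ^ 2 ≤ ∑ i, w i * (y i - z i) ^ 2 := by
  classical
  let L : EuclideanSpace ℝ ι →ₗ[ℝ] EuclideanSpace ℝ ι :=
    Matrix.toEuclideanLin (Matrix.diagonal fun i => √(w i))
  have hnorm (u v : EuclideanSpace ℝ ι) : ‖L u - L v‖ ^ 2 = ∑ i, w i * (u i - v i) ^ 2 := by
    simp [EuclideanSpace.real_norm_sq_eq, L, Matrix.toLpLin_apply, Matrix.mulVec_diagonal,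
      ← mul_sub, mul_pow, sq_sqrt (hw _)]
  have hminL : IsMinOn (fun v => ‖L (WithLp.toLp 2 y) - v‖) (L '' K) (L p) := by
    rintro _ ⟨x, hx, rfl⟩
    refine le_of_sq_le_sq ?_ (norm_nonneg _)
    simpa only [norm_sub_rev (L (WithLp.toLp 2 y)), hnorm] using isMinOn_iff.1 hmin x hx
  have hle := norm_sub_le_of_isMinOn_norm_sub (hK.linear_image L) (Set.mem_image_of_mem L hp)
    (Set.mem_image_of_mem L hz) hminL
  simpa only [hnorm] using pow_le_pow_left₀ (norm_nonneg _) hle 2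

theorem sum_mul_sub_succ_le {u Δ : ℕ → ℝ} {E : ℝ} {T : ℕ} (hT : 1 ≤ T)
    (hu : 0 ≤ u 1) (hmono : MonotoneOn u (Set.Icc 1 T))
    (hΔ₀ : 0 ≤ Δ (T + 1)) (hΔ : ∀ t ∈ Set.Icc 1 T, Δ t ≤ E) :
    ∑ t ∈ Icc 1 T, u t * (Δ t - Δ (t + 1)) ≤ u T * E := by
  suffices h : ∑ t ∈ Icc 1 T, u t * (Δ t - Δ (t + 1)) ≤ u T * (E - Δ (T + 1)) from
    h.trans (mul_le_mul_of_nonneg_left (sub_le_self E hΔ₀)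
      (hu.trans (hmono ⟨le_rfl, hT⟩ ⟨hT, le_rfl⟩ hT)))
  clear hΔ₀
  induction T, hT using Nat.le_induction with
  | base =>
    rw [Icc_self, sum_singleton]
    exact mul_le_mul_of_nonneg_left (sub_le_sub_right (hΔ 1 (by simp)) _) hu
  | succ n hn ih =>
    have hsub : Set.Icc 1 n ⊆ Set.Icc 1 (n + 1) := Set.Icc_subset_Icc_right n.le_succ
    have hlast : n + 1 ∈ Set.Icc 1 (n + 1) := ⟨by lia, le_rfl⟩
    rw [sum_Icc_succ_top (by lia)]
    calc _ ≤ u n * (E - Δ (n + 1)) + u (n + 1) * (Δ (n + 1) - Δ (n + 1 + 1)) := by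
          gcongr
          exact ih (hmono.mono hsub) fun t ht => hΔ t (hsub ht)
      _ ≤ u (n + 1) * (E - Δ (n + 1)) + u (n + 1) * (Δ (n + 1) - Δ (n + 1 + 1)) := by
          gcongr
          · exact sub_nonneg.2 (hΔ _ hlast)
          · exact hmono (hsub ⟨hn, le_rfl⟩) hlast n.le_succ
      _ = u (n + 1) * (E - Δ (n + 1 + 1)) := by ring

theorem sum_momentum_energy_le {a b m g : ℕ → ℝ} {β : ℝ} {T : ℕ}
    (ha : ∀ t, 1 ≤ t → 0 ≤ a t) (hanti : AntitoneOn a (Set.Ici 1))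
    (hb : ∀ t, b t ∈ Set.Icc 0 β) (hβ : β < 1) (hm₀ : m 0 = 0)
    (hm : ∀ t, 1 ≤ t → m t = b t * m (t - 1) + (1 - b t) * g t) :
    ∑ t ∈ Icc 1 T, a t * (b t * m (t - 1) ^ 2 + (1 - b t) * g t ^ 2) ≤
      (∑ t ∈ Icc 1 T, a t * g t ^ 2) / (1 - β) := by
  have hβ₀ : 0 ≤ β := (hb 0).1.trans (hb 0).2
  rw [le_div_iff₀' (sub_pos.2 hβ)]
  -- The extra term `β a_{T+1} m_T²` pays for the momentum carried into the next round.
  suffices h : (1 - β) * ∑ t ∈ Icc 1 T, a t * (b t * m (t - 1) ^ 2 + (1 - b t) * g t ^ 2) +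
      β * (a (T + 1) * m T ^ 2) ≤ ∑ t ∈ Icc 1 T, a t * g t ^ 2 from
    (le_add_of_nonneg_right
      (mul_nonneg hβ₀ (mul_nonneg (ha _ (by lia)) (sq_nonneg _)))).trans h
  induction T with
  | zero => simp [hm₀]
  | succ n ih =>
    rw [sum_Icc_succ_top (by lia), sum_Icc_succ_top (by lia), Nat.add_sub_cancel]
    obtain ⟨hb₀, hbβ⟩ := hb (n + 1)
    set q := b (n + 1) * m n ^ 2 + (1 - b (n + 1)) * g (n + 1) ^ 2
    have hmq : m (n + 1) ^ 2 ≤ q := by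
      rw [hm (n + 1) (by lia), Nat.add_sub_cancel]
      exact even_two.convexOn_pow.2 (Set.mem_univ _) (Set.mem_univ _) hb₀ (by linarith) (by ring)
    have hqg : q ≤ g (n + 1) ^ 2 + β * m n ^ 2 := by
      nlinarith [mul_le_mul_of_nonneg_right hbβ (sq_nonneg (m n)),
        mul_nonneg hb₀ (sq_nonneg (g (n + 1)))]
    have hnext : a (n + 1 + 1) * m (n + 1) ^ 2 ≤ a (n + 1) * q :=
      mul_le_mul (hanti (by simp) (by simp) (Nat.le_succ _)) hmq (sq_nonneg _) (ha _ (by lia))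
    linarith [mul_le_mul_of_nonneg_left hnext hβ₀,
      mul_le_mul_of_nonneg_left hqg (ha (n + 1) (by lia))]

theorem antitoneOn_div_sqrt {α : ℝ} (hα : 0 ≤ α) :
    AntitoneOn (fun t : ℕ => α / √t) (Set.Ici 1) := fun _ ht _ _ htt' =>
  div_le_div_of_nonneg_left hα (sqrt_pos.2 (Nat.cast_pos.2 ht))
    (sqrt_le_sqrt (Nat.cast_le.2 htt'))

theorem sum_div_sqrt_mul_sq_le {α : ℝ} (hα : 0 ≤ α) (g : ℕ → ℝ) (T : ℕ) :
    ∑ t ∈ Icc 1 T, α / √t * g t ^ 2 ≤ α * √(1 + log T) * √(∑ t ∈ Icc 1 T, g t ^ 4) := by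
  have hharmonic : ∑ t ∈ Icc 1 T, (√(t : ℝ))⁻¹ ^ 2 ≤ 1 + log T := by
    simpa [harmonic_eq_sum_Icc] using harmonic_le_one_add_log T
  calc ∑ t ∈ Icc 1 T, α / √t * g t ^ 2
      = α * ∑ t ∈ Icc 1 T, (√(t : ℝ))⁻¹ * g t ^ 2 := by
        simp only [mul_sum, div_eq_mul_inv, mul_assoc]
    _ ≤ α * (√(∑ t ∈ Icc 1 T, (√(t : ℝ))⁻¹ ^ 2) * √(∑ t ∈ Icc 1 T, (g t ^ 2) ^ 2)) := by
        gcongr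
        exact sum_mul_le_sqrt_mul_sqrt _ _ _
    _ ≤ α * (√(1 + log T) * √(∑ t ∈ Icc 1 T, (g t ^ 2) ^ 2)) := by gcongr
    _ = α * √(1 + log T) * √(∑ t ∈ Icc 1 T, g t ^ 4) := by simp only [← pow_mul, mul_assoc]

theorem mul_le_of_momentum_step {a w b M G : ℝ} (ha : 0 < a) (hw : 0 < w) (hb₀ : 0 ≤ b)
    (hb₁ : b < 1) (x : ℝ) :
    G * x ≤ w / (2 * a) * (x ^ 2 - (x - a * (b * M + (1 - b) * G) / w) ^ 2) +
      b / (1 - b) * (w / (2 * a) * x ^ 2) + a / (2 * w) * (b * M ^ 2 + (1 - b) * G ^ 2) := by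
  have hb' : 0 < 1 - b := sub_pos.2 hb₁
  have hsquare : 0 ≤ b / (2 * (1 - b) * a * w) * (w * x - (1 - b) * a * (G - M)) ^ 2 := by
    positivity
  rw [← sub_nonneg]
  convert hsquare using 1
  field_simp
  ring

theorem add_regret_terms_le {A α L κ S Q β : ℝ} (hA : 0 ≤ A) (hα : 0 < α) (hL : 0 ≤ L)
    (hκ : 0 < κ) (hS : 0 ≤ S) (hQ : 0 ≤ Q) (hβ₀ : 0 ≤ β) (hβ₁ : β < 1) :
    A / (2 * α) * S + α * L / (2 * κ * (1 - β)) * Q ≤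
      A / (2 * α * (1 - β)) * S + (1 + β) * α * L / (2 * κ * (1 - β) ^ 3) * Q := by
  have hβ : 0 < 1 - β := sub_pos.2 hβ₁
  gcongr ?_ * S + ?_ / (2 * κ * ?_) * Q
  · exact div_le_div_of_nonneg_left hA (by positivity)
      (mul_le_of_le_one_right (by positivity) (sub_le_self 1 hβ₀))
  · rw [mul_assoc]
    exact le_mul_of_one_le_left (by positivity) (le_add_of_nonneg_right hβ₀)
  · exact pow_le_of_le_one hβ.le (sub_le_self 1 hβ₀) three_ne_zero

section Iteration

variable {ι : Type*} [Fintype ι] {F : Set (EuclideanSpace ℝ ι)} {a b : ℕ → ℝ} {w : ℕ → ι → ℝ}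
  {g m θ : ℕ → EuclideanSpace ℝ ι} {z : EuclideanSpace ℝ ι} {β κ D : ℝ} {T : ℕ}

/-- The momentum iteration with step sizes `a`, momentum parameters `b` and diagonal preconditioners
`w`, projected onto `F` in the `w t`-weighted norm. AdaBelief is the case `w t = √(s t)`. Rounds are
numbered from `1`; the projection is encoded as a minimizer, so its existence is part of the data,
and how `w` arises from the gradients `g` is left open. -/
structure IsProjectedMomentum (F : Set (EuclideanSpace ℝ ι)) (a b : ℕ → ℝ) (w : ℕ → ι → ℝ)
    (g m θ : ℕ → EuclideanSpace ℝ ι) : Prop where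
  init_mem : θ 1 ∈ F
  momentum_zero : m 0 = 0
  momentum : ∀ t, 1 ≤ t → ∀ i, m t i = b t * m (t - 1) i + (1 - b t) * g t i
  succ_mem : ∀ t, 1 ≤ t → θ (t + 1) ∈ F
  isMinOn : ∀ t, 1 ≤ t →
    IsMinOn (fun x => ∑ i, w t i * (x i - (θ t i - a t * m t i / w t i)) ^ 2) F (θ (t + 1))

namespace IsProjectedMomentum

theorem mem (h : IsProjectedMomentum F a b w g m θ) : ∀ t, 1 ≤ t → θ t ∈ F
  | 1, _ => h.init_mem
  | t + 2, _ => h.succ_mem (t + 1) (by lia)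

theorem sq_sub_le (h : IsProjectedMomentum F a b w g m θ)
    (hD : ∀ x ∈ F, ∀ y ∈ F, ∀ i, |x i - y i| ≤ D) (hz : z ∈ F) {t : ℕ} (ht : 1 ≤ t) (i : ι) :
    (θ t i - z i) ^ 2 ≤ D ^ 2 := by
  rw [← sq_abs]
  exact pow_le_pow_left₀ (abs_nonneg _) (hD _ (h.mem t ht) _ hz i) 2

theorem inner_sub_le (h : IsProjectedMomentum F a b w g m θ) (hF : Convex ℝ F) (hz : z ∈ F) {t : ℕ}
    (ht : 1 ≤ t) (ha : 0 < a t) (hw : ∀ i, 0 < w t i) (hb₀ : 0 ≤ b t) (hb₁ : b t < 1) :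
    ⟪g t, θ t - z⟫_ℝ ≤ ∑ i, (w t i / (2 * a t) * ((θ t i - z i) ^ 2 - (θ (t + 1) i - z i) ^ 2) +
      b t / (1 - b t) * (w t i / (2 * a t) * (θ t i - z i) ^ 2) +
      a t / (2 * w t i) * (b t * m (t - 1) i ^ 2 + (1 - b t) * g t i ^ 2)) := by
  set y : ι → ℝ := fun i => θ t i - a t * m t i / w t i
  have hproj : ∑ i, w t i / (2 * a t) * (θ (t + 1) i - z i) ^ 2 ≤
      ∑ i, w t i / (2 * a t) * (y i - z i) ^ 2 := by
    simp only [div_mul_eq_mul_div, ← sum_div]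
    gcongr ?_ / _
    exact sum_mul_sq_sub_le_of_isMinOn hF (fun i => (hw i).le) (h.succ_mem t ht) hz (h.isMinOn t ht)
  have hcoord := sum_le_sum fun i (_ : i ∈ univ) =>
    mul_le_of_momentum_step (M := m (t - 1) i) (G := g t i) ha (hw i) hb₀ hb₁ (θ t i - z i)
  have hinner : ⟪g t, θ t - z⟫_ℝ = ∑ i, g t i * (θ t i - z i) := by
    simp [PiLp.inner_apply, mul_comm]
  simp only [← h.momentum t ht, sub_right_comm _ (z _), mul_sub, sum_add_distrib,
    sum_sub_distrib] at hcoord hproj hinner ⊢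
  linarith

theorem sum_potential_sub_le (h : IsProjectedMomentum F a b w g m θ)
    (hD : ∀ x ∈ F, ∀ y ∈ F, ∀ i, |x i - y i| ≤ D) (hz : z ∈ F) (hT : 1 ≤ T)
    (ha : ∀ t, 1 ≤ t → 0 < a t) (hanti : AntitoneOn a (Set.Ici 1))
    (hw : ∀ t ∈ Set.Icc 1 T, ∀ i, 0 ≤ w t i) (hmono : ∀ i, MonotoneOn (w · i) (Set.Icc 1 T)) :
    ∑ t ∈ Icc 1 T, ∑ i, w t i / (2 * a t) * ((θ t i - z i) ^ 2 - (θ (t + 1) i - z i) ^ 2) ≤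
      D ^ 2 / (2 * a T) * ∑ i, w T i := by
  rw [sum_comm, mul_sum]
  refine sum_le_sum fun i _ => ?_
  have hu : 0 ≤ w 1 i / (2 * a 1) :=
    div_nonneg (hw 1 ⟨le_rfl, hT⟩ i) (mul_nonneg zero_le_two (ha 1 le_rfl).le)
  have humono : MonotoneOn (fun t => w t i / (2 * a t)) (Set.Icc 1 T) := fun _ ht _ ht' htt' =>
    div_le_div₀ (hw _ ht' i) (hmono i ht ht' htt') (mul_pos two_pos (ha _ ht'.1))
      (mul_le_mul_of_nonneg_left (hanti ht.1 ht'.1 htt') zero_le_two)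
  calc _ ≤ w T i / (2 * a T) * D ^ 2 :=
        sum_mul_sub_succ_le (Δ := fun t => (θ t i - z i) ^ 2) hT hu humono (sq_nonneg _)
          fun t ht => h.sq_sub_le hD hz ht.1 i
    _ = D ^ 2 / (2 * a T) * w T i := by ring

theorem sum_young_term_le (h : IsProjectedMomentum F a b w g m θ)
    (hD : ∀ x ∈ F, ∀ y ∈ F, ∀ i, |x i - y i| ≤ D) (hz : z ∈ F) (ha : ∀ t, 1 ≤ t → 0 < a t)
    (hw : ∀ t ∈ Set.Icc 1 T, ∀ i, 0 ≤ w t i) (hb : ∀ t, b t ∈ Set.Icc 0 β) (hβ : β < 1) :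
    ∑ t ∈ Icc 1 T, ∑ i, b t / (1 - b t) * (w t i / (2 * a t) * (θ t i - z i) ^ 2) ≤
      D ^ 2 / (2 * (1 - β)) * ∑ t ∈ Icc 1 T, ∑ i, b t * w t i / a t := by
  simp only [mul_sum]
  refine sum_le_sum fun t ht => sum_le_sum fun i _ => ?_
  rw [mem_Icc] at ht
  have := ha t ht.1
  have := hw t ht i
  have hb₀ := (hb t).1
  have hβ' : 0 < 1 - β := sub_pos.2 hβ
  calc _ ≤ b t / (1 - β) * (w t i / (2 * a t) * D ^ 2) := by
        gcongr b t / (1 - ?_) * (_ * ?_)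
        exacts [(hb t).2, h.sq_sub_le hD hz ht.1 i]
    _ = D ^ 2 / (2 * (1 - β)) * (b t * w t i / a t) := by field_simp

theorem sum_energy_term_le (h : IsProjectedMomentum F a b w g m θ) (ha : ∀ t, 1 ≤ t → 0 < a t)
    (hanti : AntitoneOn a (Set.Ici 1)) (hκ : 0 < κ) (hw : ∀ t ∈ Set.Icc 1 T, ∀ i, κ ≤ w t i)
    (hb : ∀ t, b t ∈ Set.Icc 0 β) (hβ : β < 1) :
    ∑ t ∈ Icc 1 T, ∑ i, a t / (2 * w t i) * (b t * m (t - 1) i ^ 2 + (1 - b t) * g t i ^ 2) ≤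
      1 / (2 * κ * (1 - β)) * ∑ i, ∑ t ∈ Icc 1 T, a t * g t i ^ 2 := by
  rw [sum_comm, mul_sum]
  refine sum_le_sum fun i _ => ?_
  have henergy := sum_momentum_energy_le (T := T) (fun t ht => (ha t ht).le) hanti hb hβ
    (by simp [h.momentum_zero] : m 0 i = 0) fun t ht => h.momentum t ht i
  calc _ ≤ ∑ t ∈ Icc 1 T, a t / (2 * κ) * (b t * m (t - 1) i ^ 2 + (1 - b t) * g t i ^ 2) := by
        refine sum_le_sum fun t ht => ?_
        rw [mem_Icc] at ht
        have hb₀ := (hb t).1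
        have hb₁ : 0 ≤ 1 - b t := by linarith [(hb t).2]
        have := ha t ht.1
        have := hw t ht i
        gcongr
    _ = 1 / (2 * κ) *
          ∑ t ∈ Icc 1 T, a t * (b t * m (t - 1) i ^ 2 + (1 - b t) * g t i ^ 2) := by
        rw [mul_sum]
        exact sum_congr rfl fun t _ => by ring
    _ ≤ 1 / (2 * κ) * ((∑ t ∈ Icc 1 T, a t * g t i ^ 2) / (1 - β)) := by gcongr
    _ = 1 / (2 * κ * (1 - β)) * ∑ t ∈ Icc 1 T, a t * g t i ^ 2 := by
        rw [div_mul_div_comm, one_mul, one_div_mul_eq_div]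

theorem sum_inner_sub_le (h : IsProjectedMomentum F a b w g m θ) (hF : Convex ℝ F)
    (hD : ∀ x ∈ F, ∀ y ∈ F, ∀ i, |x i - y i| ≤ D) (hz : z ∈ F) (hT : 1 ≤ T)
    (ha : ∀ t, 1 ≤ t → 0 < a t) (hanti : AntitoneOn a (Set.Ici 1)) (hκ : 0 < κ)
    (hw : ∀ t ∈ Set.Icc 1 T, ∀ i, κ ≤ w t i) (hmono : ∀ i, MonotoneOn (w · i) (Set.Icc 1 T))
    (hb : ∀ t, b t ∈ Set.Icc 0 β) (hβ : β < 1) :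
    ∑ t ∈ Icc 1 T, ⟪g t, θ t - z⟫_ℝ ≤ D ^ 2 / (2 * a T) * ∑ i, w T i +
      1 / (2 * κ * (1 - β)) * ∑ i, ∑ t ∈ Icc 1 T, a t * g t i ^ 2 +
      D ^ 2 / (2 * (1 - β)) * ∑ t ∈ Icc 1 T, ∑ i, b t * w t i / a t := by
  have hw₀ : ∀ t ∈ Set.Icc 1 T, ∀ i, 0 < w t i := fun t ht i => hκ.trans_le (hw t ht i)
  have hround := sum_le_sum fun t (ht : t ∈ Icc 1 T) =>
    have ht := mem_Icc.1 ht
    h.inner_sub_le hF hz ht.1 (ha t ht.1) (hw₀ t ht) (hb t).1 ((hb t).2.trans_lt hβ)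
  simp only [sum_add_distrib] at hround
  linarith [h.sum_potential_sub_le hD hz hT ha hanti (fun t ht i => (hw₀ t ht i).le) hmono,
    h.sum_young_term_le hD hz ha (fun t ht i => (hw₀ t ht i).le) hb hβ,
    h.sum_energy_term_le ha hanti hκ hw hb hβ]

end IsProjectedMomentum

end Iteration

theorem adabelief_convex_regret_general {ι : Type*} [Fintype ι] {F : Set (EuclideanSpace ℝ ι)}
    (hF : Convex ℝ F) {D c α β : ℝ} (hD : ∀ x ∈ F, ∀ y ∈ F, ∀ i, |x i - y i| ≤ D) (hα : 0 < α)
    (hc : 0 < c) (hβ : β < 1) {b : ℕ → ℝ} (hb : ∀ t, b t ∈ Set.Icc 0 β)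
    {f : ℕ → EuclideanSpace ℝ ι → ℝ} {g m θ : ℕ → EuclideanSpace ℝ ι} {s : ℕ → ι → ℝ} {T : ℕ}
    (hf : ∀ t, 1 ≤ t → ConvexOn ℝ F (f t))
    (hg : ∀ t, 1 ≤ t → HasGradientWithinAt (f t) (g t) F (θ t))
    (hs : ∀ t ∈ Set.Icc 1 T, ∀ i, c ≤ s t i) (hmono : ∀ i, MonotoneOn (s · i) (Set.Icc 1 T))
    (h : IsProjectedMomentum F (fun t => α / √t) b (fun t i => √(s t i)) g m θ)
    {z : EuclideanSpace ℝ ι} (hz : z ∈ F) :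
    ∑ t ∈ Icc 1 T, (f t (θ t) - f t z) ≤ D ^ 2 * √T / (2 * α) * ∑ i, √(s T i) +
      α * √(1 + log T) / (2 * √c * (1 - β)) * ∑ i, √(∑ t ∈ Icc 1 T, g t i ^ 4) +
      D ^ 2 / (2 * (1 - β)) * ∑ t ∈ Icc 1 T, ∑ i, b t * √(s t i) / (α / √t) := by
  obtain rfl | hT : T = 0 ∨ 1 ≤ T := by lia
  · simp
  have := sub_pos.2 hβ
  have hstep : ∀ t : ℕ, 1 ≤ t → 0 < α / √t := fun t ht =>
    div_pos hα (sqrt_pos.2 (Nat.cast_pos.2 ht))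
  have hlinear : ∀ t ∈ Icc 1 T, f t (θ t) - f t z ≤ ⟪g t, θ t - z⟫_ℝ := fun t ht =>
    have ht := (mem_Icc.1 ht).1
    sub_le_of_convexOn_of_hasFDerivWithinAt (hf t ht) (h.mem t ht) hz (hg t ht).hasFDerivWithinAt
  have hregret := h.sum_inner_sub_le hF hD hz hT hstep (antitoneOn_div_sqrt hα.le) (sqrt_pos.2 hc)
    (fun t ht i => sqrt_le_sqrt (hs t ht i))
    (fun i => fun _ ht _ ht' htt' => sqrt_le_sqrt (hmono i ht ht' htt')) hb hβ
  refine (sum_le_sum hlinear).trans (hregret.trans ?_)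
  gcongr ?_ + ?_ + _
  · exact (by field_simp : D ^ 2 / (2 * (α / √T)) * ∑ i, √(s T i) = _).le
  · calc _ ≤ 1 / (2 * √c * (1 - β)) *
          ∑ i, α * √(1 + log T) * √(∑ t ∈ Icc 1 T, g t i ^ 4) := by
          gcongr with i
          exact sum_div_sqrt_mul_sq_le hα.le (g · i) T
      _ = _ := by rw [← mul_sum]; ring

/-- Theorem 2.1: regret bound for AdaBelief with projected updates in the
convex online setting. `θ_{t+1}` is the point of `F` minimizing
`x ↦ Σ_i √(s_{t,i})(x_i - y_{t,i})²` with `y_t = θ_t - α_t m_t/√s_t`, `α_t = α/√t`,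
`β_{1,1} = β₁`, `0 ≤ β_{1,t} ≤ β₁ < 1`, `c ≤ s_{t,i}` and `s` componentwise
nondecreasing on `[T]`, each `f_t` convex and differentiable with `g_t = ∇f_t(θ_t)`,
`‖g_t‖_∞ ≤ G_∞/2`, and `F` of ℓ∞-diameter at most `D_∞`. -/
theorem adabelief_convex_regret
    (d T : ℕ)
    (F : Set (EuclideanSpace ℝ (Fin d)))
    (hFne : F.Nonempty) (hFclosed : IsClosed F) (hFconvex : Convex ℝ F)
    (D G c α β₁ : ℝ)
    (hD : ∀ x ∈ F, ∀ y ∈ F, ∀ i, |x i - y i| ≤ D)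
    (hα : 0 < α) (hc : 0 < c) (hβ₁0 : 0 ≤ β₁) (hβ₁1 : β₁ < 1)
    (β1seq : ℕ → ℝ)
    (hβ11 : β1seq 1 = β₁)
    (hβseq : ∀ t, 0 ≤ β1seq t ∧ β1seq t ≤ β₁)
    (f : ℕ → EuclideanSpace ℝ (Fin d) → ℝ)
    (θ m g : ℕ → EuclideanSpace ℝ (Fin d)) (s : ℕ → Fin d → ℝ)
    (hθ1 : θ 1 ∈ F)
    (hm0 : m 0 = 0)
    (hm : ∀ t, 1 ≤ t → ∀ i, m t i = β1seq t * m (t - 1) i + (1 - β1seq t) * g t i)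
    (hconvex : ∀ t, ConvexOn ℝ Set.univ (f t))
    (hgrad : ∀ t, 1 ≤ t → HasGradientAt (f t) (g t) (θ t))
    (hgbound : ∀ t, 1 ≤ t → ∀ i, |g t i| ≤ G / 2)
    (hslb : ∀ t ∈ Finset.Icc 1 T, ∀ i, c ≤ s t i)
    (hsmono : ∀ t ∈ Finset.Icc 1 T, ∀ i, s t i ≤ s (t + 1) i)
    (hmem : ∀ t, 1 ≤ t → θ (t + 1) ∈ F)
    (hmin : ∀ t, 1 ≤ t → ∀ x ∈ F,
      (∑ i, Real.sqrt (s t i) *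
          (θ (t + 1) i - (θ t i - α / Real.sqrt t * m t i / Real.sqrt (s t i))) ^ 2)
        ≤ ∑ i, Real.sqrt (s t i) *
            (x i - (θ t i - α / Real.sqrt t * m t i / Real.sqrt (s t i))) ^ 2) :
    ∀ θstar ∈ F,
      ∑ t ∈ Finset.Icc 1 T, (f t (θ t) - f t θstar)
        ≤ D ^ 2 * Real.sqrt T / (2 * α * (1 - β₁)) * ∑ i, Real.sqrt (s T i)
          + (1 + β₁) * α * Real.sqrt (1 + Real.log T) /
              (2 * Real.sqrt c * (1 - β₁) ^ 3) *
              ∑ i, Real.sqrt (∑ t ∈ Finset.Icc 1 T, (g t i) ^ 4)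
          + D ^ 2 / (2 * (1 - β₁)) *
              ∑ t ∈ Finset.Icc 1 T, ∑ i,
                β1seq t * Real.sqrt (s t i) / (α / Real.sqrt t) := by
  exact fun θstar hθstar => (adabelief_convex_regret_general hFconvex hD hα hc hβ₁1 hβseq
    (fun t _ => (hconvex t).subset (Set.subset_univ F) hFconvex)
    (fun t ht => (hgrad t ht).hasFDerivAt.hasFDerivWithinAt) (fun t ht => hslb t (mem_Icc.2 ht))
    (fun i => monotoneOn_of_le_add_one Set.ordConnected_Icc fun t _ ht _ =>
      hsmono t (mem_Icc.2 ht) i)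
    ⟨hθ1, hm0, hm, hmem, fun t ht => isMinOn_iff.2 (hmin t ht)⟩ hθstar).trans
    (add_le_add_left (add_regret_terms_le (by positivity) hα (sqrt_nonneg _) (sqrt_pos.2 hc)
      (by positivity) (by positivity) hβ₁0 hβ₁1) _)
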